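/- arXiv:2604.14647 — 2 statements merged into one kernel-verified Lean document; each statement's English description precedes it below -/
import Mathlib

section
/- Let p, q, r ≥ 0 be real numbers, let R be a finite relation between finite types A and B, and let (X, Y) be any pair of random variables supported on R. Then (p + r + 1)·H(Y|X) + I(X;Y) + (q + 2)·H(X|Y) ≤ ln V_{p,q,r}(R), where V_{p,q,r}(R) := Σ over triples (a,b,c) with (a,b) ∈ R and (c,b) ∈ R of deg_R(a)^p · deg_R(b)^q · deg_R(c)^r. -/
/-!
Write `P` for the joint mass function of `(X, Y)`. The left-hand side rearranges to
`(p + r) H(Y|X) + q H(X|Y) + (2 H(X,Y) - H(Y))`.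

The last bracket is the entropy of the coupling `Q(a,b,c) = P(a,b) P(c,b) / P_Y(b)`, which is
carried by the paths `(a, b, c)` over which `Vmom` sums and whose `(a,b)`- and `(c,b)`-marginals
are both `P`. Gibbs' inequality for `Q` against the summand of `Vmom` (`glue_le`) gives
`(p + r) E[ln deg X] + q E[ln deg Y] + H(Q) ≤ ln V`. As `p, q, r ≥ 0`, it remains to use
`H(Y|X) ≤ E[ln deg X]` and its mirror image (`cond_le`).
-/

open MeasureTheory Finset

/-- The probability that a random variable `X` takes the value `a`. -/
noncomputable def prob {Ω : Type*} [MeasurableSpace Ω] (μ : Measure Ω)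
    {α : Type*} (X : Ω → α) (a : α) : ℝ :=
  (μ (X ⁻¹' {a})).toReal

/-- Shannon entropy (in nats) of a random variable valued in a finite type. -/
noncomputable def entropy {Ω : Type*} [MeasurableSpace Ω] (μ : Measure Ω)
    {α : Type*} [Fintype α] (X : Ω → α) : ℝ :=
  - ∑ a : α, prob μ X a * Real.log (prob μ X a)

/-- Conditional entropy `H(Y|X) = H(X, Y) - H(X)`. -/
noncomputable def condEntropy {Ω : Type*} [MeasurableSpace Ω] (μ : Measure Ω)
    {α β : Type*} [Fintype α] [Fintype β] (Y : Ω → β) (X : Ω → α) : ℝ :=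
  entropy μ (fun ω => (X ω, Y ω)) - entropy μ X

/-- Mutual information `I(X;Y) = H(X) + H(Y) - H(X, Y)`. -/
noncomputable def mutualInfo {Ω : Type*} [MeasurableSpace Ω] (μ : Measure Ω)
    {α β : Type*} [Fintype α] [Fintype β] (X : Ω → α) (Y : Ω → β) : ℝ :=
  entropy μ X + entropy μ Y - entropy μ (fun ω => (X ω, Y ω))

/-- `degA R a` is the number of `b` with `(a, b) ∈ R`. -/
def degA {A B : Type*} [DecidableEq A] (R : Finset (A × B)) (a : A) : ℕ :=
  (R.filter fun x => x.1 = a).card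

/-- `degB R b` is the number of `a` with `(a, b) ∈ R`. -/
def degB {A B : Type*} [DecidableEq B] (R : Finset (A × B)) (b : B) : ℕ :=
  (R.filter fun x => x.2 = b).card

/-- The caterpillar moment `V_{p,q,r}(R)`, summing over 3-vertex paths
`(a, b, c)` with `(a,b) ∈ R` and `(c,b) ∈ R`. -/
noncomputable def Vmom {A B : Type*} [Fintype A] [Fintype B]
    [DecidableEq A] [DecidableEq B] (p q r : ℝ) (R : Finset (A × B)) : ℝ :=
  ∑ a : A, ∑ b : B, ∑ c : A,
    if (a, b) ∈ R ∧ (c, b) ∈ R then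
      (degA R a : ℝ) ^ p * (degB R b : ℝ) ^ q * (degA R c : ℝ) ^ r
    else 0

/-- The caterpillar moment `N_{p,q,r,s}(R)`, summing over 4-vertex paths
`(a, b, c, d)` with `(a,b) ∈ R`, `(c,b) ∈ R`, and `(c,d) ∈ R`. -/
noncomputable def Nmom {A B : Type*} [Fintype A] [Fintype B]
    [DecidableEq A] [DecidableEq B] (p q r s : ℝ) (R : Finset (A × B)) : ℝ :=
  ∑ a : A, ∑ b : B, ∑ c : A, ∑ d : B,
    if (a, b) ∈ R ∧ (c, b) ∈ R ∧ (c, d) ∈ R then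
      (degA R a : ℝ) ^ p * (degB R b : ℝ) ^ q * (degA R c : ℝ) ^ r *
        (degB R d : ℝ) ^ s
    else 0

/-- The caterpillar moment `W_{p,q,r,s,t}(R)`, summing over 5-vertex paths
`(a, b, c, d, e)` with `(a,b) ∈ R`, `(c,b) ∈ R`, `(c,d) ∈ R`, and `(e,d) ∈ R`. -/
noncomputable def Wmom {A B : Type*} [Fintype A] [Fintype B]
    [DecidableEq A] [DecidableEq B] (p q r s t : ℝ) (R : Finset (A × B)) : ℝ :=
  ∑ a : A, ∑ b : B, ∑ c : A, ∑ d : B, ∑ e : A,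
    if (a, b) ∈ R ∧ (c, b) ∈ R ∧ (c, d) ∈ R ∧ (e, d) ∈ R then
      (degA R a : ℝ) ^ p * (degB R b : ℝ) ^ q * (degA R c : ℝ) ^ r *
        (degB R d : ℝ) ^ s * (degA R e : ℝ) ^ t
    else 0

/-- Gibbs' inequality against an unnormalised weight `w`. -/
lemma gibbs {ι : Type*} (s : Finset ι) (P w : ι → ℝ) (hP : ∀ i ∈ s, 0 ≤ P i)
    (hsum : ∑ i ∈ s, P i = 1) (hw : ∀ i ∈ s, 0 ≤ w i) (hpos : ∀ i ∈ s, P i ≠ 0 → 0 < w i) :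
    ∑ i ∈ s, P i * (Real.log (w i) - Real.log (P i)) ≤ Real.log (∑ i ∈ s, w i) := by
  have hS : 0 < ∑ i ∈ s, w i := by
    obtain ⟨i, hi, hne⟩ := Finset.exists_ne_zero_of_sum_ne_zero (s := s) (f := P)
      (by rw [hsum]; exact one_ne_zero)
    exact Finset.sum_pos' hw ⟨i, hi, hpos i hi hne⟩
  set S := ∑ i ∈ s, w i with hSdef
  have key : ∀ i ∈ s, P i * (Real.log (w i) - Real.log (P i))
      ≤ P i * Real.log S + (w i / S - P i) := by
    intro i hi
    rcases eq_or_ne (P i) 0 with h0 | h0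
    · have := div_nonneg (hw i hi) hS.le
      simpa [h0] using this
    · have hPi : 0 < P i := lt_of_le_of_ne (hP i hi) h0.symm
      have hwi := hpos i hi h0
      have h1 := Real.log_le_sub_one_of_pos (x := w i / (S * P i)) (by positivity)
      rw [Real.log_div hwi.ne' (by positivity), Real.log_mul hS.ne' h0] at h1
      have h2 := mul_le_mul_of_nonneg_left h1 hPi.le
      have h3 : P i * (w i / (S * P i) - 1) = w i / S - P i := by field_simp
      linarith
  refine (Finset.sum_le_sum key).trans ?_
  rw [Finset.sum_add_distrib, ← Finset.sum_mul, Finset.sum_sub_distrib, ← Finset.sum_div, hsum,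
    ← hSdef, div_self hS.ne']
  simp

/-- `H(Y|X) ≤ E[ln deg X]` for a joint mass function `P` supported on `S`: Gibbs' inequality
against the weight `P_X(a) / deg a` on `S`, whose total mass is at most one. -/
lemma cond_le {A B : Type*} [Fintype A] [Fintype B] (S : A → B → Prop)
    [∀ a b, Decidable (S a b)] (P : A → B → ℝ) (d : A → ℕ)
    (hd : ∀ a, d a = (univ.filter (S a)).card)
    (hP : ∀ a b, 0 ≤ P a b) (hsum : ∑ a, ∑ b, P a b = 1) (hS : ∀ a b, P a b ≠ 0 → S a b) :
    ∑ a, ∑ b, P a b * (Real.log (∑ b', P a b') - Real.log (P a b))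
      ≤ ∑ a, ∑ b, P a b * Real.log (d a) := by
  have hM : ∀ a, 0 ≤ ∑ b', P a b' := fun a => Finset.sum_nonneg fun b _ => hP a b
  have hMpos : ∀ a b, P a b ≠ 0 → 0 < ∑ b', P a b' := fun a b h =>
    Finset.sum_pos' (fun b _ => hP a b) ⟨b, mem_univ b, lt_of_le_of_ne (hP a b) h.symm⟩
  have hdpos : ∀ a b, P a b ≠ 0 → (0 : ℝ) < d a := fun a b h => by
    rw [hd]
    exact_mod_cast Finset.card_pos.2 ⟨b, by simpa using hS a b h⟩
  set w : A × B → ℝ := fun x => if S x.1 x.2 then (∑ b', P x.1 b') / d x.1 else 0 with hw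
  have hw0 : ∀ x, 0 ≤ w x := fun x => by
    simp only [hw]
    split_ifs
    · exact div_nonneg (hM _) (Nat.cast_nonneg _)
    · exact le_rfl
  have g := gibbs univ (fun x : A × B => P x.1 x.2) w (fun x _ => hP _ _)
    (by rw [Fintype.sum_prod_type]; exact hsum) (fun x _ => hw0 x)
    (fun x _ h => by
      simp only [hw, if_pos (hS _ _ h)]
      exact div_pos (hMpos _ _ h) (hdpos _ _ h))
  have hle : ∑ x, w x ≤ 1 := by
    rw [Fintype.sum_prod_type, ← hsum]
    refine Finset.sum_le_sum fun a _ => ?_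
    simp only [hw]
    rw [← Finset.sum_filter, Finset.sum_const, ← hd, nsmul_eq_mul]
    rcases eq_or_ne (d a : ℝ) 0 with h | h
    · simpa [h] using hM a
    · exact (mul_div_cancel₀ _ h).le
  have hlog := g.trans (Real.log_nonpos (Finset.sum_nonneg fun x _ => hw0 x) hle)
  rw [Fintype.sum_prod_type] at hlog
  rw [← sub_nonpos, ← Finset.sum_sub_distrib]
  refine le_trans (le_of_eq ?_) hlog
  refine Finset.sum_congr rfl fun a _ => ?_
  rw [← Finset.sum_sub_distrib]
  refine Finset.sum_congr rfl fun b _ => ?_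
  rcases eq_or_ne (P a b) 0 with h | h
  · simp [h]
  · simp only [hw, if_pos (hS _ _ h)]
    rw [Real.log_div (hMpos _ _ h).ne' (hdpos _ _ h).ne']
    ring

/-- The coupling `P(a,b) P(c,b) / P_Y(b)`, which glues `X` and a copy of it, independent given `Y`,
along `Y`, has `(a, b)`-marginal `P`. -/
lemma glue_sum {A B : Type*} [Fintype A] [Fintype B] (P : A → B → ℝ) (hP : ∀ a b, 0 ≤ P a b)
    (F : A → B → ℝ) :
    ∑ a, ∑ b, ∑ c, P a b * P c b / (∑ a', P a' b) * F a b = ∑ a, ∑ b, P a b * F a b := by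
  refine Finset.sum_congr rfl fun a _ => Finset.sum_congr rfl fun b _ => ?_
  rw [← Finset.sum_mul, ← Finset.sum_div, ← Finset.mul_sum]
  rcases eq_or_ne (∑ a', P a' b) 0 with h | h
  · have := (Finset.sum_eq_zero_iff_of_nonneg (fun a _ => hP a b)).1 h a (mem_univ a)
    simp [this]
  · rw [mul_div_cancel_right₀ _ h]

/-- The `(c, b)`-marginal of the glued coupling is `P` as well. -/
lemma glue_sum' {A B : Type*} [Fintype A] [Fintype B] (P : A → B → ℝ) (hP : ∀ a b, 0 ≤ P a b)
    (F : A → B → ℝ) :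
    ∑ a, ∑ b, ∑ c, P a b * P c b / (∑ a', P a' b) * F c b = ∑ a, ∑ b, P a b * F a b := by
  rw [← glue_sum P hP F, Finset.sum_comm]
  conv_rhs => rw [Finset.sum_comm]
  refine Finset.sum_congr rfl fun b _ => ?_
  rw [Finset.sum_comm]
  exact Finset.sum_congr rfl fun a _ => Finset.sum_congr rfl fun c _ => by
    rw [mul_comm (P c b)]

lemma degA_eq {A B : Type*} [Fintype B] [DecidableEq A] [DecidableEq B]
    (R : Finset (A × B)) (a : A) :
    degA R a = (univ.filter fun b => (a, b) ∈ R).card := by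
  unfold degA
  refine Finset.card_bij' (fun x _ => x.2) (fun b _ => (a, b)) ?_ ?_ ?_ ?_ <;> aesop

lemma degB_eq {A B : Type*} [Fintype A] [DecidableEq A] [DecidableEq B]
    (R : Finset (A × B)) (b : B) :
    degB R b = (univ.filter fun a => (a, b) ∈ R).card := by
  unfold degB
  refine Finset.card_bij' (fun x _ => x.1) (fun a _ => (a, b)) ?_ ?_ ?_ ?_ <;> aesop

/-- Gibbs' inequality for the glued coupling against the summand of `Vmom`; the coupling has
entropy `2 H(X,Y) - H(Y)`. -/
lemma glue_le {A B : Type*} [Fintype A] [Fintype B] [DecidableEq A] [DecidableEq B]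
    (p q r : ℝ) (R : Finset (A × B)) (P : A → B → ℝ)
    (hP : ∀ a b, 0 ≤ P a b) (hsum : ∑ a, ∑ b, P a b = 1) (hS : ∀ a b, P a b ≠ 0 → (a, b) ∈ R) :
    ∑ a, ∑ b, P a b * (p * Real.log (degA R a) + q * Real.log (degB R b)
        - Real.log (P a b) + Real.log (∑ a', P a' b))
      + ∑ a, ∑ b, P a b * (r * Real.log (degA R a) - Real.log (P a b))
      ≤ Real.log (Vmom p q r R) := by
  have hM : ∀ b, 0 ≤ ∑ a', P a' b := fun b => Finset.sum_nonneg fun a _ => hP a b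
  have hdA : ∀ a b, (a, b) ∈ R → (0 : ℝ) < degA R a := fun a b h => by
    rw [degA_eq]
    exact_mod_cast Finset.card_pos.2 ⟨b, by simpa using h⟩
  have hdB : ∀ a b, (a, b) ∈ R → (0 : ℝ) < degB R b := fun a b h => by
    rw [degB_eq]
    exact_mod_cast Finset.card_pos.2 ⟨a, by simpa using h⟩
  set Q : A × B × A → ℝ := fun x => P x.1 x.2.1 * P x.2.2 x.2.1 / (∑ a', P a' x.2.1) with hQ
  set w : A × B × A → ℝ := fun x => if (x.1, x.2.1) ∈ R ∧ (x.2.2, x.2.1) ∈ R then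
      (degA R x.1 : ℝ) ^ p * (degB R x.2.1 : ℝ) ^ q * (degA R x.2.2 : ℝ) ^ r
    else 0 with hw
  have hQne : ∀ x, Q x ≠ 0 →
      P x.1 x.2.1 ≠ 0 ∧ P x.2.2 x.2.1 ≠ 0 ∧ (∑ a', P a' x.2.1) ≠ 0 := fun x hx => by
    simp only [hQ] at hx
    refine ⟨?_, ?_, ?_⟩ <;> intro h <;> simp [h] at hx
  have g := gibbs univ Q w
    (fun x _ => div_nonneg (mul_nonneg (hP _ _) (hP _ _)) (hM _))
    (by
      have := glue_sum P hP fun _ _ => 1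
      simp only [mul_one] at this
      simp only [Fintype.sum_prod_type, hQ]
      rw [this, hsum])
    (fun x _ => by simp only [hw]; split_ifs <;> positivity)
    (fun x _ hx => by
      obtain ⟨h1, h2, -⟩ := hQne x hx
      simp only [hw, if_pos (And.intro (hS _ _ h1) (hS _ _ h2))]
      have := hdA _ _ (hS _ _ h1)
      have := hdB _ _ (hS _ _ h1)
      have := hdA _ _ (hS _ _ h2)
      positivity)
  have hV : ∑ x, w x = Vmom p q r R := by
    simp only [Fintype.sum_prod_type, hw, Vmom]
  rw [hV] at g
  refine le_trans (le_of_eq ?_) g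
  rw [← glue_sum P hP (fun a b => p * Real.log (degA R a) + q * Real.log (degB R b)
        - Real.log (P a b) + Real.log (∑ a', P a' b)),
    ← glue_sum' P hP (fun a b => r * Real.log (degA R a) - Real.log (P a b))]
  simp only [Fintype.sum_prod_type, ← Finset.sum_add_distrib]
  refine Finset.sum_congr rfl fun a _ => Finset.sum_congr rfl fun b _ =>
    Finset.sum_congr rfl fun c _ => ?_
  rw [← mul_add]
  change Q (a, b, c) * _ = _
  rcases eq_or_ne (Q (a, b, c)) 0 with h | h
  · simp [h]
  · obtain ⟨h1, h2, h3⟩ := hQne _ h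
    have e1 := hdA _ _ (hS _ _ h1)
    have e2 := hdB _ _ (hS _ _ h1)
    have e3 := hdA _ _ (hS _ _ h2)
    congr 1
    simp only [hw, if_pos (And.intro (hS _ _ h1) (hS _ _ h2)), hQ]
    simp only at h1 h2 h3 e1 e2 e3
    rw [Real.log_div (mul_ne_zero h1 h2) h3, Real.log_mul h1 h2,
      Real.log_mul (by positivity) (by positivity), Real.log_mul (by positivity) (by positivity),
      Real.log_rpow e1, Real.log_rpow e2, Real.log_rpow e3]
    ring

lemma prob_sum {Ω : Type*} [MeasurableSpace Ω] {A B : Type*} [Fintype B]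
    [MeasurableSpace A] [MeasurableSingletonClass A]
    [MeasurableSpace B] [MeasurableSingletonClass B]
    (μ : Measure Ω) [IsProbabilityMeasure μ]
    (X : Ω → A) (Y : Ω → B) (hX : Measurable X) (hY : Measurable Y) (a : A) :
    prob μ X a = ∑ b, prob μ (fun ω => (X ω, Y ω)) (a, b) := by
  unfold prob
  have : X ⁻¹' {a} = ⋃ b ∈ (univ : Finset B), (fun ω => (X ω, Y ω)) ⁻¹' {(a, b)} := by
    ext ω; simp
  rw [this]
  refine measureReal_biUnion_finset (μ := μ) ?_ ?_
  · intro b _ c _ hbc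
    refine Set.disjoint_left.2 fun ω h1 h2 => hbc ?_
    simp at h1 h2
    exact h1.2.symm.trans h2.2
  · intro b _
    exact (hX.prodMk hY) (measurableSet_singleton _)

/-- caterpillar bound for `V`: for `p, q, r ≥ 0` and
`(X, Y)` supported on `R`,
`(p+r+1)·H(Y|X) + I(X;Y) + (q+2)·H(X|Y) ≤ ln V_{p,q,r}(R)`. -/
theorem stmt4 {Ω : Type*} [MeasurableSpace Ω]
    {A B : Type*} [Fintype A] [Fintype B] [DecidableEq A] [DecidableEq B]
    [MeasurableSpace A] [MeasurableSingletonClass A]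
    [MeasurableSpace B] [MeasurableSingletonClass B]
    (p q r : ℝ) (hp : 0 ≤ p) (hq : 0 ≤ q) (hr : 0 ≤ r) (R : Finset (A × B))
    (μ : Measure Ω) [IsProbabilityMeasure μ]
    (X : Ω → A) (Y : Ω → B) (hX : Measurable X) (hY : Measurable Y)
    (hsupp : ∀ᵐ ω ∂μ, (X ω, Y ω) ∈ R) :
    (p + r + 1) * condEntropy μ Y X + mutualInfo μ X Y +
        (q + 2) * condEntropy μ X Y ≤
      Real.log (Vmom p q r R) := by
  set P : A → B → ℝ := fun a b => prob μ (fun ω => (X ω, Y ω)) (a, b) with hPdef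
  have hswap : ∀ a b, prob μ (fun ω => (Y ω, X ω)) (b, a) = P a b := fun a b => by
    simp only [hPdef, prob]
    congr 2
    ext ω
    simp [and_comm]
  have hPA : ∀ a, prob μ X a = ∑ b, P a b := prob_sum μ X Y hX hY
  have hPB : ∀ b, prob μ Y b = ∑ a, P a b := fun b => by
    rw [prob_sum μ Y X hY hX]
    exact Finset.sum_congr rfl fun a _ => hswap a b
  have hP : ∀ a b, 0 ≤ P a b := fun a b => ENNReal.toReal_nonneg
  have hsum : ∑ a, ∑ b, P a b = 1 := by
    have h := prob_sum μ (fun _ : Ω => ()) X measurable_const hX ()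
    have h2 : ∀ a, prob μ (fun ω => ((), X ω)) ((), a) = prob μ X a := fun a => by
      simp only [prob]
      congr 2
      ext ω
      simp
    simp only [h2, hPA] at h
    rw [← h]
    simp [prob]
  have hS : ∀ a b, P a b ≠ 0 → (a, b) ∈ R := fun a b h => by
    by_contra hR
    refine h ?_
    have h0 : μ ((fun ω => (X ω, Y ω)) ⁻¹' {(a, b)}) = 0 := by
      refine measure_mono_null (fun ω hω => ?_) (ae_iff.1 hsupp)
      simp only [Set.mem_preimage, Set.mem_singleton_iff] at hω
      simpa [hω] using hR
    simp [hPdef, prob, h0]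
  have eXY : entropy μ (fun ω => (X ω, Y ω)) = -∑ a, ∑ b, P a b * Real.log (P a b) := by
    simp only [entropy, Fintype.sum_prod_type, hPdef]
  have eYX : entropy μ (fun ω => (Y ω, X ω)) = -∑ a, ∑ b, P a b * Real.log (P a b) := by
    simp only [entropy, Fintype.sum_prod_type, hswap]
    rw [Finset.sum_comm]
  have eX : entropy μ X = -∑ a, ∑ b, P a b * Real.log (∑ b', P a b') := by
    simp only [entropy, hPA, Finset.sum_mul]
  have eY : entropy μ Y = -∑ a, ∑ b, P a b * Real.log (∑ a', P a' b) := by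
    simp only [entropy, hPB]
    rw [Finset.sum_comm]
    simp only [Finset.sum_mul]
  have c1 := cond_le (fun a b => (a, b) ∈ R) P (degA R) (degA_eq R) hP hsum hS
  have c2 := cond_le (fun b a => (a, b) ∈ R) (fun b a => P a b) (degB R) (degB_eq R)
    (fun b a => hP a b) (by rw [Finset.sum_comm]; exact hsum) (fun b a => hS a b)
  rw [Finset.sum_comm] at c2
  conv_rhs at c2 => rw [Finset.sum_comm]
  have g := glue_le p q r R P hP hsum hS
  simp only [mul_add, mul_sub, Finset.sum_add_distrib, Finset.sum_sub_distrib,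
    mul_left_comm _ p, mul_left_comm _ q, mul_left_comm _ r, ← Finset.mul_sum] at c1 c2 g
  simp only [condEntropy, mutualInfo, eXY, eYX, eX, eY]
  have c1' := mul_le_mul_of_nonneg_left c1 (add_nonneg hp hr)
  have c2' := mul_le_mul_of_nonneg_left c2 hq
  linarith
end

section
/- Let 0 < w < 1 and let p, q, r, p'', q'', r'' ≥ 0 be real numbers. Let R be a finite relation between finite types A and B. Then V_{p,q,r}(R)^w · V_{p'',q'',r''}(R)^{1−w} ≥ V_{wp+(1−w)p'', wq+(1−w)q'', wr+(1−w)r''}(R); that is, ln V_{p,q,r}(R) is convex in (p, q, r). -/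
/-!
For fixed `(a, b, c)`, the summand of `V` is a product of powers of fixed nonnegative numbers, so
its value at a convex combination of exponents is the weighted geometric mean of its values at the
two endpoints (`rpow_convex_comb`). The Hölder inequality with exponents `1 / w` and `1 / (1 - w)`
(`sum_rpow_mul_rpow_le`) over all triples then bounds the sum of the geometric means by the
geometric mean of the sums.
-/

open Finset

/-- The Hölder inequality in geometric-mean form. -/
lemma sum_rpow_mul_rpow_le {ι : Type*} (s : Finset ι) (f g : ι → ℝ) {w : ℝ}
    (hw0 : 0 < w) (hw1 : w < 1) (hf : ∀ i ∈ s, 0 ≤ f i) (hg : ∀ i ∈ s, 0 ≤ g i) :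
    ∑ i ∈ s, f i ^ w * g i ^ (1 - w) ≤ (∑ i ∈ s, f i) ^ w * (∑ i ∈ s, g i) ^ (1 - w) := by
  have hw : 0 < 1 - w := sub_pos.2 hw1
  have h := Real.inner_le_Lp_mul_Lq_of_nonneg s
    (Real.HolderConjugate.inv_inv hw0 hw (add_sub_cancel w 1))
    (fun i hi => Real.rpow_nonneg (hf i hi) w) (fun i hi => Real.rpow_nonneg (hg i hi) (1 - w))
  rwa [sum_congr rfl fun i hi => Real.rpow_rpow_inv (hf i hi) hw0.ne',
    sum_congr rfl fun i hi => Real.rpow_rpow_inv (hg i hi) hw.ne', one_div, one_div,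
    inv_inv, inv_inv] at h

/-- The base may be zero: nonnegativity of the exponents keeps the identity true under the
convention `0 ^ 0 = 1`. -/
lemma rpow_convex_comb {x w p p' : ℝ} (hx : 0 ≤ x) (hw0 : 0 ≤ w) (hw1 : w ≤ 1)
    (hp : 0 ≤ p) (hp' : 0 ≤ p') :
    x ^ (w * p + (1 - w) * p') = (x ^ p) ^ w * (x ^ p') ^ (1 - w) := by
  rw [Real.rpow_add_of_nonneg hx (mul_nonneg hw0 hp) (mul_nonneg (sub_nonneg.2 hw1) hp'),
    mul_comm w, mul_comm (1 - w), Real.rpow_mul hx, Real.rpow_mul hx]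

lemma Vmom_eq_sum {A B : Type*} [Fintype A] [Fintype B] [DecidableEq A] [DecidableEq B]
    (p q r : ℝ) (R : Finset (A × B)) :
    Vmom p q r R = ∑ x : A × B × A,
      if (x.1, x.2.1) ∈ R ∧ (x.2.2, x.2.1) ∈ R then
        (degA R x.1 : ℝ) ^ p * (degB R x.2.1 : ℝ) ^ q * (degA R x.2.2 : ℝ) ^ r
      else 0 := by
  simp only [Vmom, Fintype.sum_prod_type]

/-- log-convexity of `V`:
`V_{p,q,r}(R)^w · V_{p'',q'',r''}(R)^(1-w) ≥ V_{wp+(1-w)p'', wq+(1-w)q'', wr+(1-w)r''}(R)`. -/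
theorem stmt7 {A B : Type*} [Fintype A] [Fintype B] [DecidableEq A] [DecidableEq B]
    (w p q r p'' q'' r'' : ℝ) (hw0 : 0 < w) (hw1 : w < 1)
    (hp : 0 ≤ p) (hq : 0 ≤ q) (hr : 0 ≤ r)
    (hp'' : 0 ≤ p'') (hq'' : 0 ≤ q'') (hr'' : 0 ≤ r'')
    (R : Finset (A × B)) :
    Vmom p q r R ^ w * Vmom p'' q'' r'' R ^ (1 - w) ≥
      Vmom (w * p + (1 - w) * p'') (w * q + (1 - w) * q'')
        (w * r + (1 - w) * r'') R := by
  simp only [Vmom_eq_sum]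
  refine (le_of_eq (sum_congr rfl fun x _ => ?_)).trans
    (sum_rpow_mul_rpow_le univ _ _ hw0 hw1 (fun x _ => ?_) fun x _ => ?_)
  · split_ifs
    · rw [Real.mul_rpow (by positivity) (by positivity),
        Real.mul_rpow (by positivity) (by positivity),
        Real.mul_rpow (by positivity) (by positivity),
        Real.mul_rpow (by positivity) (by positivity),
        rpow_convex_comb (Nat.cast_nonneg _) hw0.le hw1.le hp hp'',
        rpow_convex_comb (Nat.cast_nonneg _) hw0.le hw1.le hq hq'',
        rpow_convex_comb (Nat.cast_nonneg _) hw0.le hw1.le hr hr'']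
      ring
    · rw [Real.zero_rpow hw0.ne', zero_mul]
  · split_ifs <;> positivity
  · split_ifs <;> positivity
end
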